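/- For every finite simple graph G with at least 2 vertices, (1/72)·rankwidth(G) ≤ max over induced subgraphs H of G with at least 2 vertices of min-bal-cutrank(H) ≤ rankwidth(G). -/

import Mathlib

open Classical

/-- The cutrank of a pair of vertex sets `X`, `Y` in a graph `G`:
the rank over `𝔽₂` of the `X × Y` biadjacency matrix. -/
noncomputable def cutrank {V : Type*} (G : SimpleGraph V) (X Y : Finset V) : ℕ :=
  Matrix.rank (Matrix.of fun (x : X) (y : Y) => if G.Adj x.1 y.1 then (1 : ZMod 2) else 0)


/-- `(X, Y)` is a balanced partition of the vertex set `S`: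
`X ⊔ Y = S` and both parts have size at most `(2/3)|S|`. -/
def IsBalancedPartitionOf {V : Type*} (S X Y : Finset V) : Prop :=
  X ∪ Y = S ∧ Disjoint X Y ∧ 3 * X.card ≤ 2 * S.card ∧ 3 * Y.card ≤ 2 * S.card

/-- The minimum balanced cutrank of the induced subgraph `G[S]`:
the minimum of `cutrank G X Y` over balanced partitions `(X, Y)` of `S`.
(For `X, Y ⊆ S`, the biadjacency matrix in `G[S]` coincides with that in `G`.) -/
noncomputable def minBalCutrank {V : Type*} (G : SimpleGraph V) (S : Finset V) : ℕ :=
  sInf {k | ∃ X Y : Finset V, IsBalancedPartitionOf S X Y ∧ cutrank G X Y = k}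

/-- A rank-decomposition of a graph on vertex type `V`: a subcubic tree
together with a bijection from `V` to the leaves (degree-1 vertices) of the tree. -/
structure RankDecomp (V : Type*) [Fintype V] where
  n : ℕ
  tree : SimpleGraph (Fin n)
  isTree : tree.IsTree
  subcubic : ∀ t : Fin n, tree.degree t ≤ 3
  leaf : V → Fin n
  leafDeg : ∀ v : V, tree.degree (leaf v) = 1
  leafInj : Function.Injective leaf
  leafSurj : ∀ t : Fin n, tree.degree t = 1 → ∃ v : V, leaf v = t

/-- The side of the edge `{u, v}` of the decomposition tree containing `u`:
all vertices of `G` whose leaf lies in the component of `u` after deleting the edge. -/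
noncomputable def RankDecomp.side {V : Type*} [Fintype V] (d : RankDecomp V) (u v : Fin d.n) :
    Finset V :=
  Finset.univ.filter fun x => (d.tree.deleteEdges {s(u, v)}).Reachable (d.leaf x) u

/-- The decomposition `d` has width at most `k` for the graph `G`: every edge of the
tree induces a partition of the vertices of cutrank at most `k`. -/
def RankDecomp.widthLE {V : Type*} [Fintype V] (G : SimpleGraph V) (d : RankDecomp V) (k : ℕ) :
    Prop :=
  ∀ u v : Fin d.n, d.tree.Adj u v → cutrank G (d.side u v) (d.side v u) ≤ k

/-- The rankwidth of `G`: the minimum width of a rank-decomposition of `G`. -/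
noncomputable def rankwidth {V : Type*} [Fintype V] (G : SimpleGraph V) : ℕ :=
  sInf {k | ∃ d : RankDecomp V, RankDecomp.widthLE G d k}


set_option linter.unusedSectionVars false

section CR
variable {V : Type*} [Fintype V] (G : SimpleGraph V)

noncomputable def crow (x : V) : V → ZMod 2 := fun y => if G.Adj x y then 1 else 0

noncomputable def cspan (X Y : Finset V) : Submodule (ZMod 2) (V → ZMod 2) :=
  Submodule.span (ZMod 2) (crow G '' X) ⊔
    Submodule.span (ZMod 2) ((fun y : V => (Pi.single y 1 : V → ZMod 2)) '' (Yᶜ : Finset V))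

lemma cr_aux (X Y : Finset V) :
    cutrank G X Y + (Yᶜ : Finset V).card = Module.finrank (ZMod 2) (cspan G X Y) := by
  let π : (V → ZMod 2) →ₗ[ZMod 2] (Y → ZMod 2) := LinearMap.funLeft (ZMod 2) (ZMod 2) (fun y : Y => y.1)
  have hker : LinearMap.ker π = Submodule.span (ZMod 2) ((fun y : V => (Pi.single y 1 : V → ZMod 2)) '' (Yᶜ : Finset V)) := by
    apply le_antisymm
    · intro g hg
      have hg' : ∀ y ∈ Y, g y = 0 := fun y hy => congrFun (LinearMap.mem_ker.1 hg) ⟨y, hy⟩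
      have : g = ∑ y, g y • (Pi.single y 1 : V → ZMod 2) := by
        ext z; simp [Finset.sum_apply, Pi.single_apply]
      rw [this]
      refine Submodule.sum_mem _ fun y _ => ?_
      by_cases hy : y ∈ Y
      · rw [hg' y hy]; simp
      · exact Submodule.smul_mem _ _ (Submodule.subset_span ⟨y, by simpa using hy, rfl⟩)
    · rw [Submodule.span_le]
      rintro _ ⟨y, hy, rfl⟩
      have hy : y ∉ Y := by simpa using hy
      simp only [SetLike.mem_coe, LinearMap.mem_ker]
      ext z
      have : z.1 ≠ y := fun h => hy (h ▸ z.2)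
      simp [π, LinearMap.funLeft_apply, this]
  have hkerdim : Module.finrank (ZMod 2) (LinearMap.ker π) = (Yᶜ : Finset V).card := by
    have h1 := LinearMap.finrank_range_add_finrank_ker π
    have hs : Function.Surjective π := LinearMap.funLeft_surjective_of_injective _ _ _ Subtype.val_injective
    rw [LinearMap.range_eq_top.2 hs, finrank_top] at h1
    simp only [Module.finrank_fintype_fun_eq_card, Fintype.card_coe] at h1
    rw [Finset.card_compl]; omega
  have hle : LinearMap.ker π ≤ cspan G X Y := hker ▸ le_sup_right
  have h2 := LinearMap.finrank_range_add_finrank_ker (π.domRestrict (cspan G X Y))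
  have h3 : Module.finrank (ZMod 2) (LinearMap.ker (π.domRestrict (cspan G X Y))) = (Yᶜ : Finset V).card := by
    rw [← hkerdim, LinearMap.ker_domRestrict]
    exact (Submodule.comapSubtypeEquivOfLe hle).finrank_eq
  have h4 : LinearMap.range (π.domRestrict (cspan G X Y)) = Submodule.span (ZMod 2)
     (Set.range (Matrix.of fun (x : X) (y : Y) => if G.Adj x.1 y.1 then (1 : ZMod 2) else 0).row) := by
    rw [LinearMap.range_domRestrict, cspan, Submodule.map_sup, ← hker]
    have : Submodule.map π (LinearMap.ker π) = ⊥ := by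
      rw [eq_bot_iff]
      rintro _ ⟨g, hg, rfl⟩
      simpa using hg
    rw [this, sup_bot_eq, Submodule.map_span, ← Set.image_comp]
    congr 1
    ext g
    simp only [Set.mem_image, Set.mem_range, Function.comp]
    constructor
    · rintro ⟨x, hx, rfl⟩; exact ⟨⟨x, hx⟩, rfl⟩
    · rintro ⟨x, rfl⟩; exact ⟨x.1, x.2, rfl⟩
  rw [h4, h3, ← Matrix.rank_eq_finrank_span_row] at h2
  exact h2

lemma cr_submod (X₁ X₂ Y₁ Y₂ : Finset V) :
    cutrank G (X₁ ∩ X₂) (Y₁ ∪ Y₂) + cutrank G (X₁ ∪ X₂) (Y₁ ∩ Y₂) ≤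
      cutrank G X₁ Y₁ + cutrank G X₂ Y₂ := by
  have a := cr_aux G (X₁ ∩ X₂) (Y₁ ∪ Y₂)
  have b := cr_aux G (X₁ ∪ X₂) (Y₁ ∩ Y₂)
  have c := cr_aux G X₁ Y₁
  have d := cr_aux G X₂ Y₂
  have e := Submodule.finrank_sup_add_finrank_inf_eq (cspan G X₁ Y₁) (cspan G X₂ Y₂)
  have h1 : cspan G (X₁ ∩ X₂) (Y₁ ∪ Y₂) ≤ cspan G X₁ Y₁ ⊓ cspan G X₂ Y₂ := by
    refine le_inf (sup_le_sup ?_ ?_) (sup_le_sup ?_ ?_) <;>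
    · apply Submodule.span_mono
      apply Set.image_mono
      intro x
      simp +contextual
  have h2 : cspan G (X₁ ∪ X₂) (Y₁ ∩ Y₂) ≤ cspan G X₁ Y₁ ⊔ cspan G X₂ Y₂ := by
    unfold cspan
    refine sup_le (Submodule.span_le.2 ?_) (Submodule.span_le.2 ?_)
    · rintro _ ⟨x, hx, rfl⟩
      rcases Finset.mem_union.1 (Finset.mem_coe.1 hx) with hx | hx
      · exact Submodule.mem_sup_left (Submodule.mem_sup_left (Submodule.subset_span ⟨x, hx, rfl⟩))
      · exact Submodule.mem_sup_right (Submodule.mem_sup_left (Submodule.subset_span ⟨x, hx, rfl⟩))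
    · rintro _ ⟨x, hx, rfl⟩
      rw [Finset.mem_coe, Finset.compl_inter, Finset.mem_union] at hx
      rcases hx with hx | hx
      · exact Submodule.mem_sup_left (Submodule.mem_sup_right (Submodule.subset_span ⟨x, hx, rfl⟩))
      · exact Submodule.mem_sup_right (Submodule.mem_sup_right (Submodule.subset_span ⟨x, hx, rfl⟩))
  have h1' := Submodule.finrank_mono h1
  have h2' := Submodule.finrank_mono h2
  have h5 : (Y₁ ∪ Y₂)ᶜ.card + (Y₁ ∩ Y₂)ᶜ.card = Y₁ᶜ.card + Y₂ᶜ.card := by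
    rw [Finset.compl_union, Finset.compl_inter, add_comm, Finset.card_union_add_card_inter]
  omega

lemma cr_symm (X Y : Finset V) : cutrank G X Y = cutrank G Y X := by
  unfold cutrank
  rw [← Matrix.rank_transpose]
  congr 1
  ext x y
  simp [Matrix.transpose_apply, G.adj_comm]

lemma cr_le_card (X Y : Finset V) : cutrank G X Y ≤ X.card := by
  have := Matrix.rank_le_card_height (Matrix.of fun (x : X) (y : Y) => if G.Adj x.1 y.1 then (1 : ZMod 2) else 0)
  simpa [cutrank] using this

lemma cr_empty_left (Y : Finset V) : cutrank G ∅ Y = 0 := by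
  have := cr_le_card G ∅ Y
  simpa using this

lemma cr_empty_right (Y : Finset V) : cutrank G Y ∅ = 0 := by
  rw [cr_symm, cr_empty_left]

lemma cr_mono_left {X X' : Finset V} (Y : Finset V) (h : X ⊆ X') : cutrank G X Y ≤ cutrank G X' Y := by
  have a := cr_aux G X Y
  have b := cr_aux G X' Y
  have : cspan G X Y ≤ cspan G X' Y :=
    sup_le_sup (Submodule.span_mono (Set.image_mono (by exact_mod_cast h))) le_rfl
  have := Submodule.finrank_mono this
  omega

lemma cr_mono {X X' Y Y' : Finset V} (h : X ⊆ X') (h' : Y ⊆ Y') : cutrank G X Y ≤ cutrank G X' Y' := by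
  refine (cr_mono_left G Y h).trans ?_
  rw [cr_symm, cr_symm G X']
  exact cr_mono_left G X' h'

lemma cr_union_left (X X' Y : Finset V) : cutrank G (X ∪ X') Y ≤ cutrank G X Y + cutrank G X' Y := by
  have := cr_submod G X X' Y Y
  rw [Finset.union_self, Finset.inter_self] at this
  omega

end CR
section Main
variable {V : Type*} [Fintype V] (G : SimpleGraph V)

lemma cr_spanned (Y E Z : Finset V) (h : ∀ v ∈ E, cutrank G (insert v Y) Z ≤ cutrank G Y Z) :
    cutrank G (Y ∪ E) Z ≤ cutrank G Y Z := by
  induction E using Finset.induction_on with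
  | empty => simp
  | insert v E hv ih =>
    have h1 := ih fun x hx => h x (Finset.mem_insert_of_mem hx)
    have h2 := h v (Finset.mem_insert_self _ _)
    have h3 := cr_submod G (Y ∪ E) (insert v Y) Z Z
    rw [Finset.union_self, Finset.inter_self] at h3
    have h4 : cutrank G Y Z ≤ cutrank G ((Y ∪ E) ∩ insert v Y) Z :=
      cr_mono_left G Z (by intro x hx; simp [hx])
    have h5 : (Y ∪ E) ∪ insert v Y = Y ∪ insert v E := by ext x; simp; tauto
    rw [h5] at h3
    omega

lemma set_aux1 (S Y Y' : Finset V) : S \ Y ∪ S \ Y' = S \ (Y ∩ Y') := by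
  ext x; simp; tauto

lemma set_aux2 (S Y Y' : Finset V) : S \ Y ∩ (S \ Y') = S \ (Y ∪ Y') := by
  ext x; simp; tauto

lemma set_aux3 (U D X Y : Finset V) (hXY : X ∪ Y = U ∪ D) (hXYd : Disjoint X Y) (hdis : Disjoint U D) :
    Y ∪ D = (U ∪ D) \ (X ∩ U) ∧ X ∪ U = (U ∪ D) \ (Y ∩ D) ∧
    (X ∩ U).card + (Y ∩ U).card = U.card ∧ (Y ∩ U).card + (Y ∩ D).card = Y.card := by
  have hmem : ∀ x, (x ∈ X ∨ x ∈ Y) ↔ (x ∈ U ∨ x ∈ D) := fun x => by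
    rw [← Finset.mem_union, hXY, Finset.mem_union]
  have hd1 : ∀ x, ¬ (x ∈ X ∧ x ∈ Y) := fun x h => Finset.disjoint_left.1 hXYd h.1 h.2
  have hd2 : ∀ x, ¬ (x ∈ U ∧ x ∈ D) := fun x h => Finset.disjoint_left.1 hdis h.1 h.2
  refine ⟨?_, ?_, ?_, ?_⟩
  · ext x
    have a := hmem x; have b := hd1 x; have c := hd2 x
    clear hmem hd1 hd2 hXY hXYd hdis
    simp only [Finset.mem_union, Finset.mem_sdiff, Finset.mem_inter]; tauto
  · ext x
    have a := hmem x; have b := hd1 x; have c := hd2 x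
    clear hmem hd1 hd2 hXY hXYd hdis
    simp only [Finset.mem_union, Finset.mem_sdiff, Finset.mem_inter]; tauto
  · rw [← Finset.card_union_of_disjoint]
    · congr 1
      ext x
      have := hmem x
      simp only [Finset.mem_union, Finset.mem_inter]; tauto
    · exact Finset.disjoint_of_subset_left Finset.inter_subset_left
        (Finset.disjoint_of_subset_right Finset.inter_subset_left hXYd)
  · rw [← Finset.card_union_of_disjoint]
    · congr 1
      ext x
      have := hmem x
      simp only [Finset.mem_union, Finset.mem_inter]; tauto
    · exact Finset.disjoint_of_subset_left Finset.inter_subset_right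
        (Finset.disjoint_of_subset_right Finset.inter_subset_right hdis)

/-- Evenly weighted linkage out of `U`. -/
lemma even_weights (U : Finset V) (lam : ℕ) (hlam : 1 ≤ lam)
    (hmin : ∀ X, U ⊆ X → lam * cutrank G U Uᶜ ≤ lam * cutrank G X Xᶜ + (X \ U).card) :
    ∃ D, Disjoint U D ∧ lam * cutrank G U Uᶜ ≤ D.card ∧
      ∀ Y ⊆ D, Y.card ≤ lam * cutrank G Y ((U ∪ D) \ Y) := by
  let P : Finset V → Prop := fun D => Disjoint U D ∧ ∀ Y ⊆ D, Y.card ≤ lam * cutrank G Y ((U ∪ D) \ Y)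
  have hne : (Finset.univ.filter P).Nonempty := by
    refine ⟨∅, ?_⟩
    simp only [Finset.mem_filter, Finset.mem_univ, true_and]
    refine ⟨by simp, fun Y hY => ?_⟩
    rw [Finset.subset_empty.1 hY]; simp
  obtain ⟨D, hD, hmax⟩ := Finset.exists_max_image _ Finset.card hne
  simp only [Finset.mem_filter, Finset.mem_univ, true_and] at hD hmax
  obtain ⟨hdis, hD⟩ := hD
  refine ⟨D, hdis, ?_, hD⟩
  -- maximal tight set
  let Q : Finset V → Prop := fun Y => Y ⊆ D ∧ lam * cutrank G Y ((U ∪ D) \ Y) ≤ Y.card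
  have hQne : (Finset.univ.filter Q).Nonempty := by
    refine ⟨∅, ?_⟩
    simp [Q, cr_empty_left]
  obtain ⟨Y, hY, hYmax⟩ := Finset.exists_max_image _ Finset.card hQne
  simp only [Finset.mem_filter, Finset.mem_univ, true_and] at hY hYmax
  obtain ⟨hYD, hYt⟩ := hY
  have hQsub : ∀ Y', Q Y' → Y' ⊆ Y := by
    rintro Y' ⟨hY'D, hY't⟩
    have h1 := cr_submod G Y Y' ((U ∪ D) \ Y) ((U ∪ D) \ Y')
    have e1 : (U ∪ D) \ Y ∪ (U ∪ D) \ Y' = (U ∪ D) \ (Y ∩ Y') := set_aux1 _ _ _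
    have e2 : (U ∪ D) \ Y ∩ ((U ∪ D) \ Y') = (U ∪ D) \ (Y ∪ Y') := set_aux2 _ _ _
    rw [e1, e2] at h1
    have h2 := hD (Y ∩ Y') (Finset.inter_subset_left.trans hYD)
    have h3 := hD (Y ∪ Y') (Finset.union_subset hYD hY'D)
    have h4 := Finset.card_union_add_card_inter Y Y'
    have h5 := Nat.mul_le_mul_left lam h1
    rw [mul_add, mul_add] at h5
    have h6 : Q (Y ∪ Y') := ⟨Finset.union_subset hYD hY'D, by omega⟩
    have h7 := hYmax _ h6
    have h8 := Finset.eq_of_subset_of_card_le (Finset.subset_union_left (s₁ := Y) (s₂ := Y')) h7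
    rw [h8]; exact Finset.subset_union_right
  have hspan : ∀ v ∈ (U ∪ D)ᶜ, cutrank G (insert v Y) ((U ∪ D) \ Y) ≤ cutrank G Y ((U ∪ D) \ Y) := by
    intro v hv
    simp only [Finset.mem_compl, Finset.mem_union, not_or] at hv
    have hnot : ¬ P (insert v D) := by
      intro h
      have := hmax _ h
      rw [Finset.card_insert_of_notMem hv.2] at this
      omega
    have hdis' : Disjoint U (insert v D) := by
      rw [Finset.disjoint_insert_right]; exact ⟨hv.1, hdis⟩
    have : ∃ Y' ⊆ insert v D, lam * cutrank G Y' ((U ∪ insert v D) \ Y') < Y'.card := by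
      by_contra hcon
      push Not at hcon
      exact hnot ⟨hdis', hcon⟩
    obtain ⟨Y', hY'D, hY'⟩ := this
    have hvY' : v ∈ Y' := by
      by_contra hvn
      have hs : Y' ⊆ D := fun x hx => by
        rcases Finset.mem_insert.1 (hY'D hx) with h | h
        · exact absurd (h ▸ hx) hvn
        · exact h
      have h1 := hD Y' hs
      have h2 : cutrank G Y' ((U ∪ D) \ Y') ≤ cutrank G Y' ((U ∪ insert v D) \ Y') :=
        cr_mono G le_rfl (by intro x; simp; tauto)
      have := Nat.mul_le_mul_left lam h2
      omega
    obtain ⟨Y₀, hvY₀, rfl⟩ : ∃ Y₀, v ∉ Y₀ ∧ insert v Y₀ = Y' :=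
      ⟨Y'.erase v, Finset.notMem_erase _ _, Finset.insert_erase hvY'⟩
    have hs : Y₀ ⊆ D := fun x hx => by
        rcases Finset.mem_insert.1 (hY'D (Finset.mem_insert_of_mem hx)) with h | h
        · exact absurd (h ▸ hx) hvY₀
        · exact h
    have hset : (U ∪ insert v D) \ insert v Y₀ = (U ∪ D) \ Y₀ := by
      ext x
      by_cases hx : x = v
      · subst hx; simp [hv.1, hv.2]
      · simp [hx]
    rw [hset, Finset.card_insert_of_notMem hvY₀] at hY'
    have h1 := hD Y₀ hs
    have h2 : cutrank G Y₀ ((U ∪ D) \ Y₀) ≤ cutrank G (insert v Y₀) ((U ∪ D) \ Y₀) :=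
      cr_mono_left G _ (Finset.subset_insert _ _)
    have h2' := Nat.mul_le_mul_left lam h2
    have hYY : Y₀ ⊆ Y := hQsub _ ⟨hs, by omega⟩
    have h3 : cutrank G (insert v Y₀) ((U ∪ D) \ Y₀) = cutrank G Y₀ ((U ∪ D) \ Y₀) := by
      have : lam * cutrank G (insert v Y₀) ((U ∪ D) \ Y₀) = lam * cutrank G Y₀ ((U ∪ D) \ Y₀) := by omega
      exact Nat.eq_of_mul_eq_mul_left hlam this
    have h4 := cr_submod G Y (insert v Y₀) ((U ∪ D) \ Y) ((U ∪ D) \ Y₀)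
    have hvY : v ∉ Y := fun h => hv.2 (hYD h)
    have e1 : Y ∩ insert v Y₀ = Y₀ := by
      ext x
      simp only [Finset.mem_inter, Finset.mem_insert]
      constructor
      · rintro ⟨h, rfl | h'⟩
        · exact absurd h hvY
        · exact h'
      · exact fun h => ⟨hYY h, Or.inr h⟩
    have e2 : Y ∪ insert v Y₀ = insert v Y := by
      ext x
      simp only [Finset.mem_union, Finset.mem_insert]
      have := @hYY x
      tauto
    have e3 : (U ∪ D) \ Y ∪ (U ∪ D) \ Y₀ = (U ∪ D) \ Y₀ :=
      Finset.union_eq_right.2 (Finset.sdiff_subset_sdiff le_rfl hYY)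
    have e4 : (U ∪ D) \ Y ∩ ((U ∪ D) \ Y₀) = (U ∪ D) \ Y :=
      Finset.inter_eq_left.2 (Finset.sdiff_subset_sdiff le_rfl hYY)
    rw [e1, e2, e3, e4] at h4
    omega
  have h1 := cr_spanned G Y (U ∪ D)ᶜ ((U ∪ D) \ Y) hspan
  have hUY : U ⊆ (U ∪ D) \ Y := by
    intro x hx
    simp only [Finset.mem_sdiff, Finset.mem_union]
    exact ⟨Or.inl hx, fun h => Finset.disjoint_left.1 hdis hx (hYD h)⟩
  have h2 := hmin _ hUY
  have e1 : ((U ∪ D) \ Y)ᶜ = Y ∪ (U ∪ D)ᶜ := by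
    ext x; simp; tauto
  have e2 : ((U ∪ D) \ Y) \ U = D \ Y := by
    ext x
    have h : x ∈ U → x ∉ D := fun hx => Finset.disjoint_left.1 hdis hx
    simp
    tauto
  rw [e1, cr_symm G ((U ∪ D) \ Y), e2, Finset.card_sdiff_of_subset hYD] at h2
  have h3 := Finset.card_le_card hYD
  have h4 := Nat.mul_le_mul_left lam h1
  omega

set_option maxHeartbeats 1000000 in
/-- No well-linked set of size `72 M`. -/
lemma no_welllinked (M : ℕ) (hM : 1 ≤ M)
    (hbal : ∀ S : Finset V, 2 ≤ S.card → ∃ X Y, IsBalancedPartitionOf S X Y ∧ cutrank G X Y ≤ M)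
    (B : Finset V) (hB : B.card = 72 * M) :
    ∃ Z : Finset V, cutrank G Z Zᶜ < (B ∩ Z).card ∧ cutrank G Z Zᶜ < (B \ Z).card := by
  by_contra hcon
  push Not at hcon
  let Big : Finset V → Prop := fun X => cutrank G X Xᶜ ≤ 7 * M ∧ (B \ X).card ≤ 7 * M
  have hbig : ∀ X, cutrank G X Xᶜ ≤ 7 * M → 7 * M < (B ∩ X).card → Big X := by
    intro X h1 h2
    exact ⟨h1, (hcon X (by omega)).trans h1⟩
  have huniv : Big Finset.univ := by
    constructor
    · rw [Finset.compl_univ, cr_empty_right]; omega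
    · rw [Finset.sdiff_eq_empty_iff_subset.2 (Finset.subset_univ _)]; simp
  have key : ∀ lam : ℕ, 1 ≤ lam → (∃ U, Big U ∧ U.card + (lam + 1) * cutrank G U Uᶜ ≤ 3 * ((lam + 1) * M)) →
      (∃ U, Big U ∧ U.card + lam * cutrank G U Uᶜ ≤ 3 * (lam * M)) := by
    rintro lam hlam ⟨U₀, hU₀, hU₀le⟩
    obtain ⟨U, hU, hmin⟩ := Finset.exists_min_image (Finset.univ.filter Big)
      (fun X => X.card + lam * cutrank G X Xᶜ) ⟨Finset.univ, by simpa using huniv⟩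
    simp only [Finset.mem_filter, Finset.mem_univ, true_and] at hU hmin
    refine ⟨U, hU, ?_⟩
    have hk6 : cutrank G U Uᶜ ≤ 6 * M := by
      have h1 := hmin U₀ hU₀
      have h2 : lam * cutrank G U Uᶜ ≤ lam * (6 * M) := by nlinarith
      exact Nat.le_of_mul_le_mul_left h2 (by omega)
    obtain ⟨D, hdis, hDcard, hD⟩ := even_weights G U lam hlam (by
      intro X hX
      by_cases hlt : cutrank G X Xᶜ < cutrank G U Uᶜ
      · have hXb : Big X := ⟨by omega, (Finset.card_le_card (Finset.sdiff_subset_sdiff le_rfl hX)).trans hU.2⟩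
        have h1 := hmin X hXb
        have h2 := Finset.card_sdiff_add_card_eq_card hX
        omega
      · have := Nat.mul_le_mul_left lam (not_lt.1 hlt)
        omega)
    have hUD : U ∩ D = ∅ := Finset.disjoint_iff_inter_eq_empty.1 hdis
    -- the rank between U and D is full
    have hkD : cutrank G U Uᶜ ≤ cutrank G U D := by
      have h1 := hD D le_rfl
      have e : (U ∪ D) \ D = U := by
        rw [Finset.union_sdiff_right]; exact Finset.sdiff_eq_self_of_disjoint hdis
      rw [e, cr_symm] at h1
      exact Nat.le_of_mul_le_mul_left (hDcard.trans h1) (by omega)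
    have hDU : D ⊆ Uᶜ := fun x hx => by
      simpa using Finset.disjoint_right.1 hdis hx
    have hfull : ∀ A ⊆ U, cutrank G A Aᶜ ≤ cutrank G A ((U ∪ D) \ A) := by
      intro A hA
      have h1 := cr_submod G A U ((U ∪ D) \ A) Uᶜ
      rw [Finset.inter_eq_left.2 hA, Finset.union_eq_right.2 hA] at h1
      have h2 : cutrank G A Aᶜ ≤ cutrank G A ((U ∪ D) \ A ∪ Uᶜ) := by
        apply cr_mono G le_rfl
        intro x; simp; tauto
      have h3 : cutrank G U D ≤ cutrank G U ((U ∪ D) \ A ∩ Uᶜ) := by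
        apply cr_mono G le_rfl
        intro x hx
        have h4 := hDU hx
        have h5 : x ∉ U := by simpa using h4
        simp [hx, h5]
        exact fun h => h5 (hA h)
      omega
    have hUB : 65 * M ≤ (B ∩ U).card := by
      have := Finset.card_inter_add_card_sdiff B U
      have := hU.2
      omega
    have hUcard : 65 * M ≤ U.card := hUB.trans (Finset.card_le_card Finset.inter_subset_right)
    have hcardH : (U ∪ D).card = U.card + D.card := Finset.card_union_of_disjoint hdis
    -- a cut
    have cut : ∀ X Y : Finset V, IsBalancedPartitionOf (U ∪ D) X Y → cutrank G X Y ≤ M →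
        (B ∩ U).card ≤ 2 * (B ∩ (X ∩ U)).card → U.card + lam * cutrank G U Uᶜ ≤ 3 * (lam * M) := by
      rintro X Y ⟨hXY, hXYd, hXc, hYc⟩ hr hhalf
      have hYX : (U ∪ D) \ X = Y := by
        rw [← hXY, Finset.union_sdiff_left]; exact Finset.sdiff_eq_self_of_disjoint hXYd.symm
      obtain ⟨e1, e2, h6, h7⟩ := set_aux3 U D X Y hXY hXYd hdis
      have h1 := cr_submod G X U Y D
      rw [e1, e2, cr_symm G _ (Y ∩ D)] at h1
      have h2 := hfull (X ∩ U) Finset.inter_subset_right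
      have h3 : cutrank G U D ≤ cutrank G U Uᶜ := cr_mono G le_rfl hDU
      have h4 := hD (Y ∩ D) Finset.inter_subset_right
      have hb : Big (X ∩ U) := hbig _ (by omega) (by omega)
      have h5 := hmin _ hb
      have h8 : X.card + Y.card = (U ∪ D).card := by
        rw [← Finset.card_union_of_disjoint hXYd, hXY]
      have h9 : cutrank G (X ∩ U) (X ∩ U)ᶜ + cutrank G (Y ∩ D) ((U ∪ D) \ (Y ∩ D)) ≤ M + cutrank G U Uᶜ := by
        omega
      have h10 := Nat.mul_le_mul_left lam h9
      rw [mul_add, mul_add] at h10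
      omega
    obtain ⟨X, Y, hXY, hr⟩ := hbal (U ∪ D) (by omega)
    have hsplit : (B ∩ U).card ≤ (B ∩ (X ∩ U)).card + (B ∩ (Y ∩ U)).card := by
      refine le_trans (Finset.card_le_card ?_) (Finset.card_union_le _ _)
      intro x hx
      have hx' : x ∈ X ∪ Y := by
        rw [hXY.1]; simp at hx; simp [hx.2]
      simp at hx hx' ⊢
      tauto
    by_cases hh : (B ∩ U).card ≤ 2 * (B ∩ (X ∩ U)).card
    · exact cut X Y hXY hr hh
    · refine cut Y X ⟨by rw [Finset.union_comm]; exact hXY.1, hXY.2.1.symm, hXY.2.2.2, hXY.2.2.1⟩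
        (by rw [cr_symm]; exact hr) (by omega)
  have all : ∀ j : ℕ, j < Fintype.card V + 1 →
      ∃ U, Big U ∧ U.card + (Fintype.card V + 1 - j) * cutrank G U Uᶜ ≤ 3 * ((Fintype.card V + 1 - j) * M) := by
    intro j
    induction j with
    | zero =>
      intro _
      refine ⟨Finset.univ, huniv, ?_⟩
      simp only [Finset.compl_univ, cr_empty_right, Finset.card_univ, mul_zero, add_zero, Nat.sub_zero]
      have := Nat.mul_le_mul_left (Fintype.card V + 1) hM
      omega
    | succ j ih =>
      intro hj
      have h1 := ih (by omega)
      apply key _ (by omega)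
      have : Fintype.card V + 1 - (j + 1) + 1 = Fintype.card V + 1 - j := by omega
      rw [this]; exact h1
  obtain ⟨U, hU, hle⟩ := all (Fintype.card V) (by omega)
  have h1 : Fintype.card V + 1 - Fintype.card V = 1 := by omega
  rw [h1] at hle
  have h2 := Finset.card_inter_add_card_sdiff B U
  have h3 := hU.2
  have h4 : (B ∩ U).card ≤ U.card := Finset.card_le_card Finset.inter_subset_right
  omega

lemma exists_basis (X Y : Finset V) : ∃ B ⊆ X, B.card = cutrank G X Y ∧
    ∀ B' ⊆ B, cutrank G B' Y = B'.card := by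
  obtain ⟨B, hB, hmax⟩ := Finset.exists_max_image (Finset.univ.filter fun B => B ⊆ X ∧ cutrank G B Y = B.card)
    Finset.card ⟨∅, by simp [cr_empty_left]⟩
  simp only [Finset.mem_filter, Finset.mem_univ, true_and] at hB hmax
  have h1 : cutrank G (B ∪ X) Y ≤ cutrank G B Y := by
    apply cr_spanned
    intro v hv
    by_contra hlt
    have hvB : v ∉ B := fun h => hlt (by rw [Finset.insert_eq_of_mem h])
    have h2 := cr_le_card G (insert v B) Y
    have h3 := Finset.card_insert_of_notMem hvB
    have h4 := hmax (insert v B) ⟨Finset.insert_subset hv hB.1, by omega⟩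
    omega
  rw [Finset.union_eq_right.2 hB.1] at h1
  have h2 := cr_mono_left G Y hB.1
  refine ⟨B, hB.1, by omega, fun B' hB' => ?_⟩
  have h3 := cr_union_left G B' (B \ B') Y
  rw [Finset.union_sdiff_of_subset hB'] at h3
  have h4 := cr_le_card G (B \ B') Y
  have h5 := cr_le_card G B' Y
  have h6 := Finset.card_sdiff_add_card_eq_card hB'
  omega

lemma split_step (M : ℕ)
    (hbal : ∀ S : Finset V, 2 ≤ S.card → ∃ X Y, IsBalancedPartitionOf S X Y ∧ cutrank G X Y ≤ M)
    (X : Finset V) (hX : 2 ≤ X.card) (hf : cutrank G X Xᶜ ≤ 72 * M) :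
    ∃ X₁ X₂ : Finset V, X₁.Nonempty ∧ X₂.Nonempty ∧ Disjoint X₁ X₂ ∧ X₁ ∪ X₂ = X ∧
      cutrank G X₁ X₁ᶜ ≤ 72 * M ∧ cutrank G X₂ X₂ᶜ ≤ 72 * M := by
  have inter_bound : ∀ Z : Finset V, cutrank G (X ∩ Z) (X ∩ Z)ᶜ + cutrank G (X ∪ Z) (X ∪ Z)ᶜ ≤
      cutrank G X Xᶜ + cutrank G Z Zᶜ := by
    intro Z
    have := cr_submod G X Z Xᶜ Zᶜ
    rwa [← Finset.compl_inter, ← Finset.compl_union] at this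
  have hcompl : ∀ Z : Finset V, cutrank G Zᶜ Zᶜᶜ = cutrank G Z Zᶜ := by
    intro Z; rw [compl_compl, cr_symm]
  rcases Nat.eq_zero_or_pos M with hM | hM
  · subst hM
    -- everything has rank zero
    have hpair : ∀ x y : V, x ≠ y → cutrank G {x} {y} = 0 := by
      intro x y hxy
      obtain ⟨P, Q, ⟨h1, h2, h3, h4⟩, h5⟩ := hbal {x, y} (by rw [Finset.card_pair hxy])
      rw [Finset.card_pair hxy] at h3 h4
      have hx : x ∈ P ∪ Q := by rw [h1]; simp
      have hy : y ∈ P ∪ Q := by rw [h1]; simp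
      have hP : P.card ≤ 1 := by omega
      have hQ : Q.card ≤ 1 := by omega
      rw [Finset.card_le_one] at hP hQ
      rcases Finset.mem_union.1 hx with hx | hx <;> rcases Finset.mem_union.1 hy with hy | hy
      · exact absurd (hP _ hx _ hy) hxy
      · have := cr_mono G (Finset.singleton_subset_iff.2 hx) (Finset.singleton_subset_iff.2 hy)
        omega
      · have := cr_mono G (Finset.singleton_subset_iff.2 hy) (Finset.singleton_subset_iff.2 hx)
        rw [cr_symm]; omega
      · exact absurd (hQ _ hx _ hy) hxy
    have hsing : ∀ (x : V) (Y : Finset V), x ∉ Y → cutrank G Y {x} = 0 := by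
      intro x Y
      induction Y using Finset.induction_on with
      | empty => intro _; exact cr_empty_left G _
      | insert v Y hv ih =>
        intro hx
        simp only [Finset.mem_insert, not_or] at hx
        have h1 := cr_union_left G {v} Y {x}
        rw [ih hx.2, hpair v x (Ne.symm hx.1)] at h1
        rw [Finset.insert_eq]; omega
    have hall : ∀ (Y X : Finset V), Disjoint X Y → cutrank G X Y = 0 := by
      intro Y X
      induction X using Finset.induction_on with
      | empty => intro _; exact cr_empty_left G _
      | insert v X hv ih =>
        intro hd
        rw [Finset.disjoint_insert_left] at hd
        have h1 := cr_union_left G {v} X Y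
        rw [ih hd.2, cr_symm G {v} Y, hsing v Y hd.1] at h1
        rw [Finset.insert_eq]; omega
    have hXne : X.Nonempty := Finset.card_pos.1 (by omega)
    obtain ⟨v, hv⟩ := hXne
    refine ⟨{v}, X.erase v, by simp, ?_, ?_, ?_, ?_, ?_⟩
    · rw [← Finset.card_pos, Finset.card_erase_of_mem hv]; omega
    · simp
    · rw [← Finset.insert_eq, Finset.insert_erase hv]
    · rw [hall _ _ disjoint_compl_right]
    · rw [hall _ _ disjoint_compl_right]
  rcases hf.lt_or_eq with hlt | heq
  · have hXne : X.Nonempty := Finset.card_pos.1 (by omega)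
    obtain ⟨v, hv⟩ := hXne
    have hv1 : cutrank G {v} {v}ᶜ ≤ 1 := by simpa using cr_le_card G {v} {v}ᶜ
    refine ⟨{v}, X.erase v, by simp, ?_, ?_, ?_, ?_, ?_⟩
    · rw [← Finset.card_pos, Finset.card_erase_of_mem hv]; omega
    · simp
    · rw [← Finset.insert_eq, Finset.insert_erase hv]
    · omega
    · have h1 := inter_bound {v}ᶜ
      rw [hcompl] at h1
      have : X ∩ {v}ᶜ = X.erase v := by ext x; simp; tauto
      rw [this] at h1
      omega
  · obtain ⟨B, hBX, hBc, hB⟩ := exists_basis G Xᶜ X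
    rw [cr_symm, heq] at hBc
    obtain ⟨Z, hZ1, hZ2⟩ := no_welllinked G M hM hbal B hBc
    have piece : ∀ Z : Finset V, cutrank G Z Zᶜ < (B \ Z).card → cutrank G (X ∩ Z) (X ∩ Z)ᶜ < 72 * M := by
      intro Z hZ
      have h1 := inter_bound Z
      have h2 : cutrank G (B \ Z) X ≤ cutrank G (X ∪ Z)ᶜ (X ∪ Z) := by
        apply cr_mono
        · intro x hx
          have := Finset.mem_sdiff.1 hx
          have h3 := Finset.mem_compl.1 (hBX this.1)
          simp; tauto
        · exact Finset.subset_union_left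
      rw [hB _ Finset.sdiff_subset, cr_symm] at h2
      omega
    have p1 := piece Z hZ2
    have p2 := piece Zᶜ (by
      rw [hcompl]
      have : B \ Zᶜ = B ∩ Z := by ext x; simp
      rw [this]; exact hZ1)
    refine ⟨X ∩ Z, X ∩ Zᶜ, ?_, ?_, ?_, ?_, p1.le, p2.le⟩
    · rw [Finset.nonempty_iff_ne_empty]
      intro h
      have : X ∩ Zᶜ = X := by
        ext x
        have : x ∉ X ∩ Z := by rw [h]; simp
        simp at this ⊢; tauto
      rw [this] at p2
      omega
    · rw [Finset.nonempty_iff_ne_empty]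
      intro h
      have : X ∩ Z = X := by
        ext x
        have : x ∉ X ∩ Zᶜ := by rw [h]; simp
        simp at this ⊢; tauto
      rw [this] at p1
      omega
    · rw [Finset.disjoint_left]
      intro x; simp; tauto
    · ext x; simp; tauto

end Main

section Upper

lemma comp_cases {N : Type*} {T : SimpleGraph N} (hT : T.IsTree) {u v : N} (t : N) :
    (T.deleteEdges {s(u, v)}).Reachable t u ∨ (T.deleteEdges {s(v, u)}).Reachable t v := by
  obtain ⟨w⟩ := hT.connected.preconnected t u
  induction w with
  | nil => left; exact SimpleGraph.Reachable.refl _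
  | @cons a b c hab w ih =>
    rw [Sym2.eq_swap (a := v)] at ih ⊢
    by_cases he : s(a, b) = s(c, v)
    · rw [Sym2.eq_iff] at he
      rcases he with ⟨rfl, rfl⟩ | ⟨rfl, rfl⟩
      · left; exact SimpleGraph.Reachable.refl _
      · right; exact SimpleGraph.Reachable.refl _
    · have h1 : (T.deleteEdges {s(c, v)}).Reachable a b := by
        apply SimpleGraph.Adj.reachable
        rw [SimpleGraph.deleteEdges_adj]
        exact ⟨hab, by simpa using he⟩
      exact ih.imp h1.trans h1.trans

lemma comp_not_both {N : Type*} {T : SimpleGraph N} (hT : T.IsTree) {u v : N} (huv : T.Adj u v) (t : N)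
    (h1 : (T.deleteEdges {s(u, v)}).Reachable t u) (h2 : (T.deleteEdges {s(v, u)}).Reachable t v) : False := by
  have h := SimpleGraph.isAcyclic_iff_forall_adj_isBridge.1 hT.isAcyclic huv
  rw [SimpleGraph.isBridge_iff] at h
  rw [Sym2.eq_swap (a := v)] at h2
  apply h
  have := h1.symm.trans h2
  exact this

/-- Inclusion of components. -/
lemma comp_sub {N : Type*} {T : SimpleGraph N} (hT : T.IsTree) {u v x : N} (huv : T.Adj u v)
    (hxu : T.Adj x u) (hxv : x ≠ v) (t : N)
    (ht : (T.deleteEdges {s(x, u)}).Reachable t x) : (T.deleteEdges {s(u, v)}).Reachable t u := by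
  rcases comp_cases hT (u := u) (v := v) t with h | h
  · exact h
  · exfalso
    -- v is in the component of t, hence of x ; but v ~ u
    obtain ⟨w⟩ := h
    have key : ∀ {a b : N} (w : (T.deleteEdges {s(v, u)}).Walk a b), b = v → (T.deleteEdges {s(x, u)}).Reachable a x → (T.deleteEdges {s(x, u)}).Reachable b x ∨
        (T.deleteEdges {s(v, u)}).Reachable u b := by
      intro a b w
      induction w with
      | nil => intro _ h; exact Or.inl h
      | @cons a b c hab w ih =>
        intro hb h
        by_cases he : s(a, b) = s(x, u)
        · rw [Sym2.eq_iff] at he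
          rcases he with ⟨rfl, rfl⟩ | ⟨rfl, rfl⟩
          · exact Or.inr ⟨w⟩
          · exfalso
            exact comp_not_both hT hxu a h (SimpleGraph.Reachable.refl _)
        · refine ih hb (SimpleGraph.Reachable.trans (SimpleGraph.Adj.reachable ?_) h)
          rw [SimpleGraph.deleteEdges_adj]
          rw [SimpleGraph.deleteEdges_adj] at hab
          exact ⟨hab.1.symm, fun h => he (Sym2.eq_swap.trans (Set.mem_singleton_iff.1 h))⟩
    rcases key w rfl ht with h | h
    · refine comp_not_both hT hxu v h (SimpleGraph.Adj.reachable ?_)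
      rw [SimpleGraph.deleteEdges_adj]
      refine ⟨huv.symm, ?_⟩
      simp only [Set.mem_singleton_iff, Sym2.eq_iff, not_or]
      exact ⟨fun h => huv.ne h.1.symm, fun h => hxv h.1.symm⟩
    · exact comp_not_both hT huv u (SimpleGraph.Reachable.refl _) h

/-- Covering of a component by smaller ones. -/
lemma comp_cover {N : Type*} {T : SimpleGraph N} (hT : T.IsTree) {u v : N} (t : N) (htu : t ≠ u)
    (ht : (T.deleteEdges {s(u, v)}).Reachable t u) :
    ∃ x, T.Adj x u ∧ x ≠ v ∧ (T.deleteEdges {s(x, u)}).Reachable t x := by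
  obtain ⟨w⟩ := ht
  have key : ∀ {a b : N} (w : (T.deleteEdges {s(u, v)}).Walk a b), b = u → a ≠ u →
      ∃ x, T.Adj x u ∧ x ≠ v ∧ (T.deleteEdges {s(x, u)}).Reachable a x := by
    intro a b w
    induction w with
    | nil => intro h h'; exact absurd h h'
    | @cons a b c hab w ih =>
      intro hc ha
      rw [SimpleGraph.deleteEdges_adj] at hab
      by_cases hb : b = u
      · subst hb
        refine ⟨a, hab.1, ?_, SimpleGraph.Reachable.refl _⟩
        rintro rfl
        exact hab.2 (by simp [Sym2.eq_swap])
      · obtain ⟨x, h1, h2, h3⟩ := ih hc hb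
        refine ⟨x, h1, h2, SimpleGraph.Reachable.trans (SimpleGraph.Adj.reachable ?_) h3⟩
        rw [SimpleGraph.deleteEdges_adj]
        refine ⟨hab.1, ?_⟩
        simp only [Set.mem_singleton_iff, Sym2.eq_iff, not_or]
        exact ⟨fun h => hb h.2, fun h => ha h.1⟩
  exact key w rfl htu

variable {V : Type*} [Fintype V]

lemma side_union (d : RankDecomp V) (u v : Fin d.n) (y : V) : y ∈ d.side u v ∨ y ∈ d.side v u := by
  have := comp_cases d.isTree (u := u) (v := v) (d.leaf y)
  simpa [RankDecomp.side] using this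

lemma side_disj (d : RankDecomp V) {u v : Fin d.n} (h : d.tree.Adj u v) (y : V)
    (h1 : y ∈ d.side u v) (h2 : y ∈ d.side v u) : False := by
  simp only [RankDecomp.side, Finset.mem_filter, Finset.mem_univ, true_and] at h1 h2
  exact comp_not_both d.isTree h _ h1 h2

lemma minBal_le (G : SimpleGraph V) (d : RankDecomp V) (k : ℕ) (hd : d.widthLE G k) (S : Finset V)
    (hS : 2 ≤ S.card) : minBalCutrank G S ≤ k := by
  have hsum : ∀ u v, d.tree.Adj u v → (d.side u v ∩ S).card + (d.side v u ∩ S).card = S.card := by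
    intro u v huv
    rw [← Finset.card_union_of_disjoint]
    · congr 1
      ext y
      have := side_union d u v y
      simp only [Finset.mem_union, Finset.mem_inter]; tauto
    · rw [Finset.disjoint_left]
      intro y h1 h2
      exact side_disj d huv y (Finset.mem_inter.1 h1).1 (Finset.mem_inter.1 h2).1
  have main : ∃ u v, d.tree.Adj u v ∧ 3 * (d.side u v ∩ S).card ≤ 2 * S.card ∧
      3 * (d.side v u ∩ S).card ≤ 2 * S.card := by
    by_contra hcon
    push Not at hcon
    let C : Fin d.n × Fin d.n → Finset (Fin d.n) := fun p =>
      Finset.univ.filter fun t => (d.tree.deleteEdges {s(p.1, p.2)}).Reachable t p.1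
    have hne : (Finset.univ.filter fun p : Fin d.n × Fin d.n =>
        d.tree.Adj p.1 p.2 ∧ 2 * S.card < 3 * (d.side p.1 p.2 ∩ S).card).Nonempty := by
      obtain ⟨y, hy⟩ := Finset.card_pos.1 (by omega : 0 < S.card)
      have h1 := d.leafDeg y
      have h2 : 0 < d.tree.degree (d.leaf y) := by omega
      rw [SimpleGraph.degree_pos_iff_exists_adj] at h2
      obtain ⟨w, hw⟩ := h2
      by_cases h : 3 * (d.side (d.leaf y) w ∩ S).card ≤ 2 * S.card
      · exact ⟨(w, d.leaf y), by simpa using ⟨hw.symm, hcon _ _ hw h⟩⟩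
      · exact ⟨(d.leaf y, w), by simpa using ⟨hw, not_le.1 h⟩⟩
    obtain ⟨⟨u, v⟩, huv, hmin⟩ := Finset.exists_min_image _ (fun p => (C p).card) hne
    simp only [Finset.mem_filter, Finset.mem_univ, true_and] at huv hmin
    obtain ⟨huv, hbig⟩ := huv
    have hsmall : ∀ x, d.tree.Adj x u → x ≠ v → 3 * (d.side x u ∩ S).card < S.card := by
      intro x hx hxv
      by_contra hge
      have h1 := hsum x u hx
      have h2 : 3 * (d.side u x ∩ S).card ≤ 2 * S.card := by omega
      have h3 := hcon _ _ hx.symm h2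
      have h4 := hmin (x, u) ⟨hx, h3⟩
      have h5 : C (x, u) ⊂ C (u, v) := by
        rw [Finset.ssubset_iff_of_subset]
        · refine ⟨u, by simp [C], ?_⟩
          intro h
          simp only [C, Finset.mem_filter, Finset.mem_univ, true_and] at h
          exact comp_not_both d.isTree hx u h (SimpleGraph.Reachable.refl _)
        · intro t ht
          simp only [C, Finset.mem_filter, Finset.mem_univ, true_and] at ht ⊢
          exact comp_sub d.isTree huv hx hxv t ht
      have := Finset.card_lt_card h5
      omega
    have hdeg : (d.tree.neighborFinset u).card = d.tree.degree u := d.tree.card_neighborFinset_eq_degree u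
    have hvn : v ∈ d.tree.neighborFinset u := by simpa using huv
    have hcov : ∀ y ∈ d.side u v, d.leaf y ≠ u → ∃ x ∈ (d.tree.neighborFinset u).erase v, y ∈ d.side x u := by
      intro y hy hyu
      simp only [RankDecomp.side, Finset.mem_filter, Finset.mem_univ, true_and] at hy
      obtain ⟨x, h1, h2, h3⟩ := comp_cover d.isTree _ hyu hy
      refine ⟨x, by simp [h2, h1.symm], ?_⟩
      simpa [RankDecomp.side] using h3
    have hcard : ((d.tree.neighborFinset u).erase v).card + 1 = d.tree.degree u := by
      rw [← hdeg, Finset.card_erase_add_one hvn]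
    by_cases h1 : d.tree.degree u = 1
    · obtain ⟨z, hz⟩ := d.leafSurj u h1
      have hemp : (d.tree.neighborFinset u).erase v = ∅ := by
        rw [← Finset.card_eq_zero]; omega
      have : d.side u v ∩ S ⊆ {z} := by
        intro y hy
        rw [Finset.mem_singleton]
        apply d.leafInj
        rw [hz]
        by_contra hyu
        obtain ⟨x, hx, _⟩ := hcov y (Finset.mem_inter.1 hy).1 hyu
        rw [hemp] at hx
        simp at hx
      have := Finset.card_le_card this
      rw [Finset.card_singleton] at this
      omega
    · have hsub : d.side u v ∩ S ⊆ ((d.tree.neighborFinset u).erase v).biUnion fun x => d.side x u ∩ S := by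
        intro y hy
        rw [Finset.mem_inter] at hy
        obtain ⟨x, hx, hyx⟩ := hcov y hy.1 (fun h => h1 (h ▸ d.leafDeg y))
        rw [Finset.mem_biUnion]
        exact ⟨x, hx, Finset.mem_inter.2 ⟨hyx, hy.2⟩⟩
      have h2 := (Finset.card_le_card hsub).trans Finset.card_biUnion_le
      have h3 : 3 * ∑ x ∈ (d.tree.neighborFinset u).erase v, (d.side x u ∩ S).card ≤
          ((d.tree.neighborFinset u).erase v).card * S.card := by
        rw [Finset.mul_sum, ← smul_eq_mul]
        refine Finset.sum_le_card_nsmul _ _ _ fun x hx => ?_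
        rw [Finset.mem_erase, SimpleGraph.mem_neighborFinset] at hx
        exact (hsmall x hx.2.symm hx.1).le
      have h4 := d.subcubic u
      have h5 : ((d.tree.neighborFinset u).erase v).card * S.card ≤ 2 * S.card :=
        Nat.mul_le_mul_right _ (by omega)
      omega
  obtain ⟨u, v, huv, h1, h2⟩ := main
  refine le_trans (Nat.sInf_le ⟨d.side u v ∩ S, d.side v u ∩ S, ⟨?_, ?_, h1, h2⟩, rfl⟩) ((cr_mono G Finset.inter_subset_left Finset.inter_subset_left).trans (hd u v huv))
  · ext y
    have := side_union d u v y
    simp only [Finset.mem_union, Finset.mem_inter]; tauto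
  · rw [Finset.disjoint_left]
    intro y h1 h2
    exact side_disj d huv y (Finset.mem_inter.1 h1).1 (Finset.mem_inter.1 h2).1

end Upper

section Build
variable {V : Type*} [Fintype V]

/-- The sets obtained by iterating a splitting function, indexed by binary words. -/
def splitSets (s : Finset V → Finset V × Finset V) : List Bool → Finset V
  | [] => Finset.univ
  | true :: l => (s (splitSets s l)).1
  | false :: l => (s (splitSets s l)).2

structure GoodSplit (s : Finset V → Finset V × Finset V) : Prop where
  small : ∀ X, X.card ≤ 1 → s X = (∅, ∅)
  ne1 : ∀ X, 2 ≤ X.card → (s X).1.Nonempty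
  ne2 : ∀ X, 2 ≤ X.card → (s X).2.Nonempty
  disj : ∀ X, Disjoint (s X).1 (s X).2
  sub1 : ∀ X, (s X).1 ⊆ X
  sub2 : ∀ X, (s X).2 ⊆ X
  cover : ∀ X, 2 ≤ X.card → (s X).1 ∪ (s X).2 = X

variable {s : Finset V → Finset V × Finset V} (hs : GoodSplit s)

lemma ss_sub (hs : GoodSplit s) (b : Bool) (l : List Bool) : splitSets s (b :: l) ⊆ splitSets s l := by
  cases b
  · exact hs.sub2 _
  · exact hs.sub1 _

lemma ss_two (hs : GoodSplit s) (b : Bool) (l : List Bool) (h : (splitSets s (b :: l)).Nonempty) :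
    2 ≤ (splitSets s l).card := by
  by_contra hc
  have h1 := hs.small (splitSets s l) (by omega)
  cases b <;> simp [splitSets, h1] at h

lemma ss_ne (hs : GoodSplit s) (b : Bool) (l : List Bool) (h : 2 ≤ (splitSets s l).card) :
    (splitSets s (b :: l)).Nonempty := by
  cases b
  · exact hs.ne2 _ h
  · exact hs.ne1 _ h

lemma ss_unique (hs : GoodSplit s) (b c : Bool) (l : List Bool) (x : V)
    (h1 : x ∈ splitSets s (b :: l)) (h2 : x ∈ splitSets s (c :: l)) : b = c := by
  have : x ∈ (s (splitSets s l)).1 → x ∉ (s (splitSets s l)).2 := fun h => Finset.disjoint_left.1 (hs.disj (splitSets s l)) h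
  cases b <;> cases c
  · rfl
  · exact absurd h1 (this h2)
  · exact absurd h2 (this h1)
  · rfl

lemma ss_child (hs : GoodSplit s) (l : List Bool) (x : V) (h : 2 ≤ (splitSets s l).card)
    (hx : x ∈ splitSets s l) : ∃ b, x ∈ splitSets s (b :: l) := by
  rw [← hs.cover _ h, Finset.mem_union] at hx
  rcases hx with hx | hx
  · exact ⟨true, hx⟩
  · exact ⟨false, hx⟩

lemma ss_lt (hs : GoodSplit s) (b : Bool) (l : List Bool) (h : (splitSets s (b :: l)).Nonempty) :
    (splitSets s (b :: l)).card < (splitSets s l).card := by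
  apply Finset.card_lt_card
  rw [Finset.ssubset_iff_of_subset (ss_sub hs b l)]
  obtain ⟨x, hx⟩ := ss_ne hs (!b) l (ss_two hs b l h)
  refine ⟨x, ss_sub hs _ _ hx, fun hx' => ?_⟩
  have := ss_unique hs _ _ _ _ hx hx'
  cases b <;> simp at this

lemma ss_len (hs : GoodSplit s) (l : List Bool) (h : (splitSets s l).Nonempty) :
    (splitSets s l).card + l.length ≤ Fintype.card V := by
  induction l with
  | nil => simp [splitSets]
  | cons b l ih =>
    have h1 := ih (h.mono (ss_sub hs b l))
    have h2 := ss_lt hs b l h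
    simp only [List.length_cons]
    omega

lemma ss_mono (hs : GoodSplit s) (l t : List Bool) : splitSets s (t ++ l) ⊆ splitSets s l := by
  induction t with
  | nil => exact le_rfl
  | cons b t ih => exact (ss_sub hs b _).trans ih

lemma ss_comparable (hs : GoodSplit s) (l l' : List Bool) (x : V) (h : x ∈ splitSets s l)
    (h' : x ∈ splitSets s l') : l <:+ l' ∨ l' <:+ l := by
  induction l with
  | nil => left; exact List.nil_suffix
  | cons b l ih =>
    rcases ih (ss_sub hs b l h) with h1 | h1
    · obtain ⟨t, rfl⟩ := h1
      rcases List.eq_nil_or_concat t with rfl | ⟨t', c, rfl⟩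
      · right; simp
      · left
        have e : t' ++ [c] ++ l = t' ++ c :: l := by simp
        have e' : t'.concat c ++ l = t' ++ c :: l := by simp
        first
        | rw [e] at h' ⊢
        | rw [e'] at h' ⊢
        have := ss_unique hs _ _ _ _ h (ss_mono hs _ _ h')
        subst this
        exact List.suffix_append _ _
    · right; exact h1.trans (List.suffix_cons _ _)

lemma ss_single (hs : GoodSplit s) (x : V) : ∃ l, splitSets s l = {x} := by
  have : ∀ n : ℕ, ∀ l, (splitSets s l).card ≤ n → x ∈ splitSets s l → ∃ l', splitSets s l' = {x} := by
    intro n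
    induction n with
    | zero =>
      intro l h1 h2
      have := Finset.card_pos.2 ⟨x, h2⟩
      omega
    | succ n ih =>
      intro l h1 h2
      by_cases h : 2 ≤ (splitSets s l).card
      · obtain ⟨b, hb⟩ := ss_child hs l x h h2
        have := ss_lt hs b l ⟨x, hb⟩
        exact ih (b :: l) (by omega) hb
      · refine ⟨l, ?_⟩
        symm
        apply Finset.eq_of_subset_of_card_le (Finset.singleton_subset_iff.2 h2)
        rw [Finset.card_singleton]; omega
  exact this _ [] le_rfl (by simp [splitSets])

def wordTree {n : ℕ} (w : Fin n → List Bool) : SimpleGraph (Fin n) where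
  Adj i j := (∃ b, w i = b :: w j) ∨ (∃ b, w j = b :: w i)
  symm := ⟨fun _ _ h => h.symm⟩
  loopless := ⟨fun i h => by
    rcases h with ⟨b, h⟩ | ⟨b, h⟩ <;>
    · have := congrArg List.length h
      simp at this⟩

lemma wt_inv {n : ℕ} {w : Fin n → List Bool} (hw : Function.Injective w) {i j : Fin n} {b : Bool}
    (hij : w i = b :: w j) {a c : Fin n} (h : ((wordTree w).deleteEdges {s(i, j)}).Reachable a c) :
    w i <:+ w a ↔ w i <:+ w c := by
  have step : ∀ a c, (∃ b, w a = b :: w c) → s(a, c) ≠ s(i, j) → (w i <:+ w a ↔ w i <:+ w c) := by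
    rintro a c ⟨b', h⟩ hne
    rw [h, List.suffix_cons_iff]
    constructor
    · rintro (h' | h')
      · exfalso
        apply hne
        have e1 : a = i := hw (h.trans h'.symm)
        have e2 : c = j := hw (by rw [hij] at h'; exact (List.cons.inj h').2.symm)
        rw [e1, e2]
      · exact h'
    · exact Or.inr
  obtain ⟨p⟩ := h
  induction p with
  | nil => exact Iff.rfl
  | @cons a c d hac p ih =>
    refine Iff.trans ?_ ih
    rw [SimpleGraph.deleteEdges_adj] at hac
    obtain ⟨h1, h2⟩ := hac
    rw [Set.mem_singleton_iff] at h2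
    rcases h1 with h1 | h1
    · exact step a c h1 h2
    · exact (step c a h1 (fun h => h2 (Sym2.eq_swap.trans h))).symm

lemma wt_reach {n : ℕ} {w : Fin n → List Bool} (hw : Function.Injective w)
    (hup : ∀ i b l, w i = b :: l → ∃ j, w j = l) {i j : Fin n} {b : Bool}
    (hij : w i = b :: w j) (l : List Bool) : ∀ a, w a = l → w i <:+ w a →
    ((wordTree w).deleteEdges {s(i, j)}).Reachable a i := by
  induction l with
  | nil =>
    intro a ha h
    rw [ha] at h
    have := List.suffix_nil.1 h
    rw [hij] at this
    exact absurd this (by simp)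
  | cons b' l ih =>
    intro a ha h
    by_cases hai : a = i
    · subst hai; exact SimpleGraph.Reachable.refl _
    obtain ⟨c, hc⟩ := hup a b' l ha
    have h' := h
    rw [ha, List.suffix_cons_iff] at h
    rcases h with h | h
    · exact absurd (hw (ha.trans h.symm)) hai
    · refine SimpleGraph.Reachable.trans (SimpleGraph.Adj.reachable ?_) (ih c hc (hc ▸ h))
      rw [SimpleGraph.deleteEdges_adj]
      refine ⟨Or.inl ⟨b', by rw [hc]; exact ha⟩, ?_⟩
      simp only [Set.mem_singleton_iff, Sym2.eq_iff, not_or]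
      refine ⟨fun h => hai h.1, fun h2 => ?_⟩
      rw [h2.1, hij] at h'
      have := h'.length_le
      simp at this

lemma wt_tree {n : ℕ} {w : Fin n → List Bool} (hw : Function.Injective w)
    (hup : ∀ i b l, w i = b :: l → ∃ j, w j = l) (r : Fin n) (hr : w r = []) :
    (wordTree w).IsTree := by
  have hroot : ∀ l, ∀ i, w i = l → (wordTree w).Reachable i r := by
    intro l
    induction l with
    | nil => intro i hi; rw [hw (hi.trans hr.symm)]
    | cons b l ih =>
      intro i hi
      obtain ⟨j, hj⟩ := hup i b l hi
      exact SimpleGraph.Reachable.trans (SimpleGraph.Adj.reachable (Or.inl ⟨b, by rw [hj]; exact hi⟩)) (ih j hj)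
  refine ⟨?_, ?_⟩
  · haveI : Nonempty (Fin n) := ⟨r⟩
    exact SimpleGraph.Connected.mk fun i j => (hroot _ i rfl).trans (hroot _ j rfl).symm
  · rw [SimpleGraph.isAcyclic_iff_forall_adj_isBridge]
    have main : ∀ i j b, w i = b :: w j → ¬ ((wordTree w).deleteEdges {s(i, j)}).Reachable i j := by
      intro i j b hij h
      have h1 := (wt_inv hw hij h).1 List.suffix_rfl
      have := h1.length_le
      rw [hij] at this
      simp at this
    intro i j hij
    rw [SimpleGraph.isBridge_iff]
    rcases hij with ⟨b, h⟩ | ⟨b, h⟩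
    · exact main i j b h
    · intro h'
      apply main j i b h
      rw [Sym2.eq_swap]
      exact h'.symm

lemma build (hs : GoodSplit s) (hV : 2 ≤ Fintype.card V) :
    ∃ d : RankDecomp V, ∀ u v, d.tree.Adj u v → ∃ l, (splitSets s l).Nonempty ∧
      ((d.side u v = splitSets s l ∧ d.side v u = (splitSets s l)ᶜ) ∨
        (d.side v u = splitSets s l ∧ d.side u v = (splitSets s l)ᶜ)) := by
  have hfin : Set.Finite {l : List Bool | (splitSets s l).Nonempty} := by
    refine (List.finite_length_le Bool (Fintype.card V)).subset ?_
    intro l hl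
    have := ss_len hs l hl
    show l.length ≤ _
    omega
  haveI := hfin.fintype
  obtain ⟨n, w, hw, hne, hran⟩ : ∃ (n : ℕ) (w : Fin n → List Bool), Function.Injective w ∧
      (∀ i, (splitSets s (w i)).Nonempty) ∧ ∀ l, (splitSets s l).Nonempty → ∃ i, w i = l := by
    let e := Fintype.equivFin {l : List Bool | (splitSets s l).Nonempty}
    refine ⟨_, fun i => (e.symm i).1, ?_, ?_, ?_⟩
    · exact Subtype.val_injective.comp e.symm.injective
    · intro i; exact (e.symm i).2
    · intro l hl; exact ⟨e ⟨l, hl⟩, by simp⟩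
  have hup : ∀ i b l, w i = b :: l → ∃ j, w j = l := by
    intro i b l h
    apply hran
    exact (h ▸ hne i).mono (ss_sub hs b l)
  haveI : Nonempty V := Fintype.card_pos_iff.1 (by omega)
  obtain ⟨r, hr⟩ := hran [] (by simp [splitSets])
  have hT := wt_tree hw hup r hr
  have hdeg : ∀ i, (wordTree w).degree i = (((wordTree w).neighborFinset i).image w).card := by
    intro i
    rw [Finset.card_image_of_injective _ hw, SimpleGraph.card_neighborFinset_eq_degree]
  have hmem : ∀ i l, l ∈ ((wordTree w).neighborFinset i).image w ↔
      ((splitSets s l).Nonempty ∧ ((∃ b, w i = b :: l) ∨ (∃ b, l = b :: w i))) := by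
    intro i l
    simp only [Finset.mem_image, SimpleGraph.mem_neighborFinset]
    constructor
    · rintro ⟨j, hj, rfl⟩
      exact ⟨hne j, hj⟩
    · rintro ⟨h1, h2⟩
      obtain ⟨j, rfl⟩ := hran l h1
      exact ⟨j, h2, rfl⟩
  have hdeg3 : ∀ i, (wordTree w).degree i ≤ 3 := by
    intro i
    rw [hdeg]
    refine le_trans (Finset.card_le_card (t := {(w i).tail, true :: w i, false :: w i}) ?_) Finset.card_le_three
    intro l hl
    rw [hmem] at hl
    rcases hl.2 with ⟨b, hb⟩ | ⟨b, hb⟩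
    · simp [hb]
    · cases b <;> simp [hb]
  have hdeg1 : ∀ i, (splitSets s (w i)).card = 1 → (wordTree w).degree i = 1 := by
    intro i hi
    rw [hdeg, Finset.card_eq_one]
    cases hwi : w i with
    | nil =>
      rw [hwi] at hi
      simp [splitSets] at hi
      omega
    | cons b l =>
      refine ⟨l, ?_⟩
      ext l'
      rw [hmem, Finset.mem_singleton]
      constructor
      · rintro ⟨h1, ⟨c, h2⟩ | ⟨c, h2⟩⟩
        · rw [hwi] at h2; exact (List.cons.inj h2).2.symm
        · rw [h2] at h1
          have := ss_two hs _ _ h1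
          omega
      · rintro rfl
        exact ⟨(hwi ▸ hne i).mono (ss_sub hs b _), Or.inl ⟨b, hwi⟩⟩
  have hdeg2 : ∀ i, (wordTree w).degree i = 1 → (splitSets s (w i)).card = 1 := by
    intro i hi
    by_contra hc
    have h0 := Finset.card_pos.2 (hne i)
    have h2 : 2 ≤ (splitSets s (w i)).card := by omega
    rw [hdeg] at hi
    have h3 : ({true :: w i, false :: w i} : Finset (List Bool)) ⊆ ((wordTree w).neighborFinset i).image w := by
      intro l hl
      rw [hmem]
      simp only [Finset.mem_insert, Finset.mem_singleton] at hl
      rcases hl with rfl | rfl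
      · exact ⟨ss_ne hs _ _ h2, Or.inr ⟨_, rfl⟩⟩
      · exact ⟨ss_ne hs _ _ h2, Or.inr ⟨_, rfl⟩⟩
    have h4 := Finset.card_le_card h3
    rw [Finset.card_pair (by simp)] at h4
    omega
  have hleaf : ∀ x : V, ∃ i, splitSets s (w i) = {x} := by
    intro x
    obtain ⟨l, hl⟩ := ss_single hs x
    obtain ⟨i, rfl⟩ := hran l (by rw [hl]; simp)
    exact ⟨i, hl⟩
  choose leaf hleaf using hleaf
  have hpre : ∀ i x, x ∈ splitSets s (w i) ↔ w i <:+ w (leaf x) := by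
    intro i x
    constructor
    · intro hx
      rcases ss_comparable hs (w i) (w (leaf x)) x hx (by rw [hleaf]; simp) with h | h
      · exact h
      · obtain ⟨t, ht⟩ := h
        rcases List.eq_nil_or_concat t with rfl | ⟨t', c, rfl⟩
        · simp at ht; rw [ht]
        · exfalso
          have e : w i = t' ++ (c :: w (leaf x)) := by rw [← ht]; simp
          have h1 : (splitSets s (c :: w (leaf x))).Nonempty := by
            refine Finset.Nonempty.mono (ss_mono hs _ t') ?_
            rw [← e]; exact hne i
          have := ss_two hs _ _ h1
          rw [hleaf] at this
          simp at this
    · rintro ⟨t, ht⟩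
      have : x ∈ splitSets s (w (leaf x)) := by rw [hleaf]; simp
      rw [← ht] at this
      exact ss_mono hs _ _ this
  have hinj : ∀ i x, splitSets s (w i) = {x} → leaf x = i := by
    intro i x h
    have h1 : w i <:+ w (leaf x) := (hpre i x).1 (by rw [h]; simp)
    obtain ⟨t, ht⟩ := h1
    rcases List.eq_nil_or_concat t with rfl | ⟨t', c, rfl⟩
    · exact hw (by simpa using ht.symm)
    · exfalso
      have e : w (leaf x) = t' ++ (c :: w i) := by rw [← ht]; simp
      have h1 : (splitSets s (c :: w i)).Nonempty := by
        refine Finset.Nonempty.mono (ss_mono hs _ t') ?_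
        rw [← e]; exact hne _
      have := ss_two hs _ _ h1
      rw [h] at this
      simp at this
  let d : RankDecomp V :=
    { n := n
      tree := wordTree w
      isTree := hT
      subcubic := hdeg3
      leaf := leaf
      leafDeg := fun x => hdeg1 _ (by rw [hleaf]; simp)
      leafInj := by
        intro x y hxy
        have h1 := hleaf x
        rw [hxy, hleaf y] at h1
        exact (Finset.singleton_injective h1).symm
      leafSurj := by
        intro t ht
        obtain ⟨x, hx⟩ := Finset.card_eq_one.1 (hdeg2 t ht)
        exact ⟨x, hinj t x hx⟩ }
  have hcompl : ∀ u v, d.tree.Adj u v → d.side v u = (d.side u v)ᶜ := by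
    intro u v huv
    ext y
    rw [Finset.mem_compl]
    exact ⟨fun h h' => side_disj d huv y h' h, fun h => (side_union d u v y).resolve_left h⟩
  have hside : ∀ u v : Fin n, (∃ b, w u = b :: w v) → d.side u v = splitSets s (w u) := by
    rintro u v ⟨b, huv⟩
    ext y
    rw [hpre]
    simp only [RankDecomp.side, Finset.mem_filter, Finset.mem_univ, true_and]
    constructor
    · intro h
      exact (wt_inv hw huv h).2 List.suffix_rfl
    · intro h
      exact wt_reach hw hup huv _ _ rfl h
  refine ⟨d, fun u v huv => ?_⟩
  have huv' : (∃ b, w u = b :: w v) ∨ (∃ b, w v = b :: w u) := huv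
  rcases huv' with h | h
  · exact ⟨w u, hne u, Or.inl ⟨hside u v h, by rw [hcompl u v huv, hside u v h]⟩⟩
  · exact ⟨w v, hne v, Or.inr ⟨hside v u h, by rw [hcompl v u huv.symm, hside v u h]⟩⟩

lemma exists_decomp (G : SimpleGraph V) (k : ℕ) (hV : 2 ≤ Fintype.card V)
    (hsplit : ∀ X : Finset V, 2 ≤ X.card → cutrank G X Xᶜ ≤ k →
      ∃ X₁ X₂ : Finset V, X₁.Nonempty ∧ X₂.Nonempty ∧ Disjoint X₁ X₂ ∧ X₁ ∪ X₂ = X ∧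
        cutrank G X₁ X₁ᶜ ≤ k ∧ cutrank G X₂ X₂ᶜ ≤ k) :
    ∃ d : RankDecomp V, d.widthLE G k := by
  have h : ∀ X : Finset V, ∃ p : Finset V × Finset V, (X.card ≤ 1 → p = (∅, ∅)) ∧
      (2 ≤ X.card → p.1.Nonempty ∧ p.2.Nonempty ∧ p.1 ∪ p.2 = X) ∧ Disjoint p.1 p.2 ∧
      p.1 ⊆ X ∧ p.2 ⊆ X ∧ (cutrank G X Xᶜ ≤ k → cutrank G p.1 p.1ᶜ ≤ k ∧ cutrank G p.2 p.2ᶜ ≤ k) := by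
    intro X
    by_cases h2 : 2 ≤ X.card
    · by_cases hk : cutrank G X Xᶜ ≤ k
      · obtain ⟨A, B, h1, h3, h4, h5, h6, h7⟩ := hsplit X h2 hk
        refine ⟨(A, B), fun h => by omega, fun _ => ⟨h1, h3, h5⟩, h4, ?_, ?_, fun _ => ⟨h6, h7⟩⟩
        · rw [← h5]; exact Finset.subset_union_left
        · rw [← h5]; exact Finset.subset_union_right
      · obtain ⟨v, hv⟩ := Finset.card_pos.1 (by omega : 0 < X.card)
        refine ⟨({v}, X.erase v), fun h => by omega, fun _ => ⟨by simp, ?_, ?_⟩, by simp, by simpa using hv,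
          Finset.erase_subset _ _, fun h => absurd h hk⟩
        · rw [← Finset.card_pos, Finset.card_erase_of_mem hv]; omega
        · rw [← Finset.insert_eq, Finset.insert_erase hv]
    · refine ⟨(∅, ∅), fun _ => rfl, fun h => absurd h h2, by simp, by simp, by simp, fun _ => ?_⟩
      simp [cr_empty_left]
  choose s h1 h2 h3 h4 h5 h6 using h
  have hs : GoodSplit s := ⟨h1, fun X h => (h2 X h).1, fun X h => (h2 X h).2.1, h3, h4, h5, fun X h => (h2 X h).2.2⟩
  have hk : ∀ l, cutrank G (splitSets s l) (splitSets s l)ᶜ ≤ k := by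
    intro l
    induction l with
    | nil => simp [splitSets, cr_empty_right]
    | cons b l ih =>
      cases b
      · exact (h6 _ ih).2
      · exact (h6 _ ih).1
  obtain ⟨d, hd⟩ := build hs hV
  refine ⟨d, fun u v huv => ?_⟩
  obtain ⟨l, _, ⟨e1, e2⟩ | ⟨e1, e2⟩⟩ := hd u v huv
  · rw [e1, e2]; exact hk l
  · rw [e1, e2, cr_symm]; exact hk l

end Build

/-- For every graph `G` with at least 2 vertices, writing `M` for the maximum of
`min-bal-cutrank(H)` over induced subgraphs `H = G[S]` with at least 2 vertices,
we have `(1/72)·rankwidth(G) ≤ M ≤ rankwidth(G)`. -/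
theorem rankwidth_le_and_ge_max_minBalCutrank
    {V : Type*} [Fintype V] (G : SimpleGraph V) (hV : 2 ≤ Fintype.card V) :
    rankwidth G ≤ 72 * sSup {m | ∃ S : Finset V, 2 ≤ S.card ∧ minBalCutrank G S = m} ∧
      sSup {m | ∃ S : Finset V, 2 ≤ S.card ∧ minBalCutrank G S = m} ≤ rankwidth G := by
  have hbd : BddAbove {m | ∃ S : Finset V, 2 ≤ S.card ∧ minBalCutrank G S = m} := by
    apply Set.Finite.bddAbove
    refine (Set.finite_range (fun S : Finset V => minBalCutrank G S)).subset ?_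
    rintro m ⟨S, _, rfl⟩
    exact ⟨S, rfl⟩
  set M := sSup {m | ∃ S : Finset V, 2 ≤ S.card ∧ minBalCutrank G S = m} with hM
  have hbal : ∀ S : Finset V, 2 ≤ S.card → ∃ X Y, IsBalancedPartitionOf S X Y ∧ cutrank G X Y ≤ M := by
    intro S hS
    have hne : {k | ∃ X Y : Finset V, IsBalancedPartitionOf S X Y ∧ cutrank G X Y = k}.Nonempty := by
      obtain ⟨X, hX, hXc⟩ := Finset.exists_subset_card_eq (s := S) (n := S.card / 2) (by omega)
      refine ⟨_, X, S \ X, ⟨Finset.union_sdiff_of_subset hX, Finset.disjoint_sdiff, ?_, ?_⟩, rfl⟩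
      · omega
      · rw [Finset.card_sdiff_of_subset hX]; omega
    obtain ⟨X, Y, h1, h2⟩ := Nat.sInf_mem hne
    refine ⟨X, Y, h1, ?_⟩
    rw [h2]
    exact le_csSup hbd ⟨S, hS, rfl⟩
  have hd := exists_decomp G (72 * M) hV (split_step G M hbal)
  refine ⟨Nat.sInf_le hd, ?_⟩
  obtain ⟨d, hd'⟩ := Nat.sInf_mem (s := {k | ∃ d : RankDecomp V, RankDecomp.widthLE G d k}) ⟨_, hd⟩
  apply csSup_le'
  rintro m ⟨S, hS, rfl⟩
  exact minBal_le G d _ hd' S hS
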